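/- Let a : ℝ → ℝ be a C^∞, 2π-periodic, strictly positive function normalized so that ∫₀^{2π} a(θ)^{−1}dθ = 2π, let B(θ) = ∫₀^θ a(t)^{−1}dt and ψ(θ) = e^{iB(θ)}. If ψ̂(k) ≠ 0 for some integer k < 0 (equivalently, a is not conformally equivalent to the constant function 1), then for every α > 0 there exists a constant C > 0 such that Z_k(a) ≥ C·e^{αk} for every integer k ≥ 1. -/

import Mathlib

open MeasureTheory Real

noncomputable section

/-- The `k`-th Fourier coefficient of a `2π`-periodic function `u : ℝ → ℂ`:
`û(k) = (1/2π) ∫₀^{2π} u(θ) e^{-ikθ} dθ`. -/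
def fCoef (u : ℝ → ℂ) (k : ℤ) : ℂ :=
  (2 * Real.pi)⁻¹ * ∫ θ in (0:ℝ)..(2 * Real.pi), u θ * Complex.exp (-Complex.I * k * θ)

/-- `prodPoly m j n = n(n+j₁)(n+j₁+j₂)⋯(n+j₁+⋯+j_{m-1})`. -/
def prodPoly (m : ℕ) (j : Fin m → ℤ) (n : ℤ) : ℤ :=
  ∏ i : Fin m, (n + ∑ l ∈ Finset.Iio i, j l)

/-- The coefficient `N_{j₁…j_m} = ∑ₙ (|n(n+j₁)⋯(n+j₁+⋯+j_{m-1})| - n(n+j₁)⋯(n+j₁+⋯+j_{m-1}))`;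
only finitely many summands are nonzero. -/
def Ncoef (m : ℕ) (j : Fin m → ℤ) : ℝ :=
  ∑' n : ℤ, ((|prodPoly m j n| - prodPoly m j n : ℤ) : ℝ)

/-- A term of the series defining the zeta-invariant `Z_k(a)`:
`N_{j₁…j_{2k}} â(j₁)⋯â(j_{2k})` for `j₁+⋯+j_{2k} = 0`. -/
def zetaTerm (k : ℕ) (a : ℝ → ℝ) (j : {j : Fin (2 * k) → ℤ // ∑ i, j i = 0}) : ℂ :=
  (Ncoef (2 * k) j.val : ℂ) * ∏ i, fCoef (fun θ => (a θ : ℂ)) (j.val i)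

/-- The zeta-invariant `Z_k(a) = ∑_{j₁+⋯+j_{2k}=0} N_{j₁…j_{2k}} â(j₁)⋯â(j_{2k})`. -/
def ZetaInv (k : ℕ) (a : ℝ → ℝ) : ℂ :=
  ∑' j : {j : Fin (2 * k) → ℤ // ∑ i, j i = 0}, zetaTerm k a j

/-- `B(θ) = ∫₀^θ a(t)⁻¹ dt`. -/
def Bfun (a : ℝ → ℝ) (θ : ℝ) : ℝ := ∫ t in (0:ℝ)..θ, (a t)⁻¹

open scoped ComplexConjugate



instance factTwoPi : Fact (0 < 2 * Real.pi) := ⟨by positivity⟩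

/-- the lift of a continuous periodic function to the circle -/
def circLift (u : ℝ → ℂ) (hu : Continuous u) (hp : Function.Periodic u (2 * Real.pi)) :
    C(AddCircle (2 * Real.pi), ℂ) where
  toFun := hp.lift
  continuous_toFun := continuous_coinduced_dom.mpr hu

lemma circLift_coe (u : ℝ → ℂ) (hu : Continuous u) (hp : Function.Periodic u (2 * Real.pi))
    (x : ℝ) : circLift u hu hp (x : AddCircle (2 * Real.pi)) = u x := rfl

lemma fourierCoeff_circLift (u : ℝ → ℂ) (hu : Continuous u)
    (hp : Function.Periodic u (2 * Real.pi)) (n : ℤ) :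
    fourierCoeff (circLift u hu hp) n = fCoef u n := by
  rw [fourierCoeff_eq_intervalIntegral _ n 0, fCoef]
  rw [zero_add, ← Complex.coe_smul]
  simp only [smul_eq_mul]
  congr 1
  · push_cast; ring
  · refine intervalIntegral.integral_congr fun x _ => ?_
    simp only [circLift_coe, fourier_coe_apply]
    rw [mul_comm]
    congr 2
    push_cast
    have : (Real.pi : ℂ) ≠ 0 := by exact_mod_cast Real.pi_ne_zero
    field_simp

lemma parseval (u v : ℝ → ℂ) (hu : Continuous u) (hup : Function.Periodic u (2 * Real.pi))
    (hv : Continuous v) (hvp : Function.Periodic v (2 * Real.pi)) :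
    HasSum (fun l : ℤ => fCoef u l * conj (fCoef v l))
      ((2 * Real.pi)⁻¹ * ∫ θ in (0:ℝ)..(2 * Real.pi), u θ * conj (v θ)) := by
  set U := circLift u hu hup
  set V := circLift v hv hvp
  have h := (fourierBasis (T := 2 * Real.pi)).hasSum_inner_mul_inner
    (ContinuousMap.toLp (E := ℂ) 2 AddCircle.haarAddCircle ℂ V)
    (ContinuousMap.toLp (E := ℂ) 2 AddCircle.haarAddCircle ℂ U)
  rw [ContinuousMap.inner_toLp, AddCircle.integral_haarAddCircle,
    ← AddCircle.intervalIntegral_preimage (2 * Real.pi) 0 (fun x => U x * starRingEnd ℂ (V x))] at h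
  convert! h using 1
  · ext l
    rw [← inner_conj_symm, ← HilbertBasis.repr_apply_apply, ← HilbertBasis.repr_apply_apply,
      fourierBasis_repr, fourierBasis_repr, fourierCoeff_toLp, fourierCoeff_toLp,
      fourierCoeff_circLift, fourierCoeff_circLift, mul_comm]
  · rw [zero_add, ← Complex.coe_smul]
    simp [U, V, circLift_coe]

lemma fCoef_conj_exp (u : ℝ → ℂ) (m n : ℤ) :
    conj (fCoef (fun θ => conj (u θ) * Complex.exp (Complex.I * m * θ)) n) = fCoef u (m - n) := by
  unfold fCoef
  have h2 : (0:ℝ) ≤ 2 * Real.pi := by positivity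
  rw [map_mul, intervalIntegral.integral_of_le h2, ← integral_conj,
    ← intervalIntegral.integral_of_le h2]
  congr 1
  · exact Complex.conj_ofReal _
  · refine intervalIntegral.integral_congr fun x _ => ?_
    simp only [map_mul, Complex.conj_conj, ← Complex.exp_conj, map_neg, Complex.conj_I,
      Complex.conj_ofReal, map_intCast]
    rw [mul_assoc, ← Complex.exp_add]
    congr 2
    push_cast
    ring

lemma fCoef_conj (u : ℝ → ℂ) (n : ℤ) :
    conj (fCoef u n) = fCoef (fun θ => conj (u θ)) (-n) := by
  have := fCoef_conj_exp (fun θ => conj (u θ)) 0 n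
  simpa using this

lemma exp_periodic (m : ℤ) :
    Function.Periodic (fun θ : ℝ => Complex.exp (Complex.I * m * θ)) (2 * Real.pi) := by
  intro θ
  have : Complex.I * m * ((θ + 2 * Real.pi : ℝ) : ℂ) =
    Complex.I * m * θ + m * (2 * Real.pi * Complex.I) := by push_cast; ring
  simp only [this]
  rw [Complex.exp_add, Complex.exp_int_mul_two_pi_mul_I, mul_one]

/-- convolution of sequences -/
def conv (S u : ℤ → ℂ) (m : ℤ) : ℂ := ∑' n, S (m - n) * u n

lemma fCoef_mul (u v : ℝ → ℂ) (hu : Continuous u) (hup : Function.Periodic u (2 * Real.pi))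
    (hv : Continuous v) (hvp : Function.Periodic v (2 * Real.pi)) (m : ℤ) :
    HasSum (fun n => fCoef u (m - n) * fCoef v n) (fCoef (fun θ => u θ * v θ) m) := by
  have h := parseval v (fun θ => conj (u θ) * Complex.exp (Complex.I * m * θ)) hv hvp
    (by fun_prop) (by
      intro θ
      have := exp_periodic m θ
      simp only at this
      simp only [this, hup θ])
  simp only [fCoef_conj_exp] at h
  convert! h using 1
  · ext n; ring
  · unfold fCoef
    congr 1
    refine intervalIntegral.integral_congr fun x _ => ?_
    simp only [map_mul, Complex.conj_conj, ← Complex.exp_conj, Complex.conj_I,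
      Complex.conj_ofReal, map_intCast]
    ring_nf

lemma fCoef_mul_eq (u v : ℝ → ℂ) (hu : Continuous u) (hup : Function.Periodic u (2 * Real.pi))
    (hv : Continuous v) (hvp : Function.Periodic v (2 * Real.pi)) :
    fCoef (fun θ => u θ * v θ) = conv (fCoef u) (fCoef v) :=
  funext fun m => (fCoef_mul u v hu hup hv hvp m).tsum_eq.symm

lemma fCoef_deriv (u : ℝ → ℂ) (hu : ContDiff ℝ 1 u) (hup : Function.Periodic u (2 * Real.pi))
    (n : ℤ) : fCoef (deriv u) n = Complex.I * n * fCoef u n := by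
  have hd : ∀ x ∈ Set.uIcc 0 (2 * Real.pi), HasDerivAt u (deriv u x) x := fun x _ =>
    (hu.differentiable (by norm_num) x).hasDerivAt
  have he : ∀ x ∈ Set.uIcc 0 (2 * Real.pi),
      HasDerivAt (fun θ : ℝ => Complex.exp (-Complex.I * n * θ))
        (Complex.exp (-Complex.I * n * x) * (-Complex.I * n)) x := by
    intro x _
    have h1 : HasDerivAt (fun θ : ℝ => -Complex.I * n * (θ : ℂ)) (-Complex.I * n) x := by
      simpa using (Complex.ofRealCLM.hasDerivAt (x := x)).const_mul (-Complex.I * n)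
    exact h1.cexp
  have h := intervalIntegral.integral_deriv_mul_eq_sub hd he
    ((hu.continuous_deriv le_rfl).intervalIntegrable _ _)
    (Continuous.intervalIntegrable (by fun_prop) _ _)
  have hc : Continuous u := hu.continuous
  have hc' : Continuous (deriv u) := hu.continuous_deriv le_rfl
  rw [intervalIntegral.integral_add (Continuous.intervalIntegrable (by fun_prop) _ _)
    (Continuous.intervalIntegrable (by fun_prop) _ _)] at h
  have h0 : u (2 * Real.pi) = u 0 := by simpa using hup 0
  have h1 : Complex.exp (-Complex.I * n * ((2 * Real.pi : ℝ) : ℂ)) = 1 := by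
    have := exp_periodic (-n) 0
    simpa using this
  rw [h0, h1] at h
  simp only [Complex.ofReal_zero, mul_zero, Complex.exp_zero, sub_self] at h
  have key : (∫ θ in (0:ℝ)..(2 * Real.pi), deriv u θ * Complex.exp (-Complex.I * n * θ)) =
      Complex.I * n * ∫ θ in (0:ℝ)..(2 * Real.pi), u θ * Complex.exp (-Complex.I * n * θ) := by
    rw [eq_neg_of_add_eq_zero_left h, ← intervalIntegral.integral_neg,
      ← intervalIntegral.integral_const_mul]
    refine intervalIntegral.integral_congr fun x _ => ?_
    ring
  unfold fCoef
  rw [key]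
  ring

lemma periodic_deriv (u : ℝ → ℂ) (hup : Function.Periodic u (2 * Real.pi)) :
    Function.Periodic (deriv u) (2 * Real.pi) := by
  intro x
  have h := deriv_comp_add_const u (2 * Real.pi) x
  rw [← h]
  congr 1
  exact funext hup

lemma fCoef_bdd (u : ℝ → ℂ) : ∃ C, ∀ n, ‖fCoef u n‖ ≤ C := by
  refine ⟨(2 * Real.pi)⁻¹ * ∫ θ in (0:ℝ)..(2 * Real.pi), ‖u θ‖, fun n => ?_⟩
  unfold fCoef
  rw [norm_mul]
  have h2 : (0:ℝ) ≤ 2 * Real.pi := by positivity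
  gcongr
  · simp [abs_of_pos Real.pi_pos]
  · refine (intervalIntegral.norm_integral_le_integral_norm h2).trans (le_of_eq ?_)
    refine intervalIntegral.integral_congr fun x _ => ?_
    have : Complex.exp (-Complex.I * n * x) = Complex.exp ((-(n * x) : ℝ) * Complex.I) := by
      congr 1; push_cast; ring
    simp only [norm_mul, this, Complex.norm_exp_ofReal_mul_I, mul_one]

lemma fCoef_pow_bdd (N : ℕ) : ∀ (u : ℝ → ℂ), ContDiff ℝ (⊤ : ℕ∞) u →
    Function.Periodic u (2 * Real.pi) → ∃ C, ∀ n : ℤ, |(n:ℝ)| ^ N * ‖fCoef u n‖ ≤ C := by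
  induction N with
  | zero =>
    intro u _ _
    simpa using fCoef_bdd u
  | succ N ih =>
    intro u hu hp
    obtain ⟨C, hC⟩ := ih (deriv u) ((contDiff_infty_iff_deriv.mp hu).2) (periodic_deriv u hp)
    refine ⟨C, fun n => ?_⟩
    have := hC n
    rw [fCoef_deriv u (hu.of_le (by exact_mod_cast le_top)) hp] at this
    simp only [norm_mul, Complex.norm_I, one_mul, Complex.norm_intCast] at this
    rw [pow_succ, mul_assoc]
    exact this

/-- rapidly decaying sequences -/
def RD (u : ℤ → ℂ) : Prop := ∀ N : ℕ, Summable fun n : ℤ => (1 + |(n:ℝ)|) ^ N * ‖u n‖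

lemma summable_inv_sq : Summable fun n : ℤ => ((1 + |(n:ℝ)|) ^ 2)⁻¹ := by
  have h : Summable fun n : ℤ => 1 / (n:ℝ) ^ 2 := Real.summable_one_div_int_pow.mpr (by norm_num)
  refine Summable.of_norm_bounded_eventually (g := fun n : ℤ => 1 / (n:ℝ) ^ 2) h ?_
  rw [Filter.eventually_cofinite]
  refine (Set.finite_singleton (0:ℤ)).subset ?_
  intro n hn
  by_contra h0
  apply hn
  have hn0 : (n:ℝ) ≠ 0 := by exact_mod_cast h0
  have : 0 < |(n:ℝ)| := abs_pos.mpr hn0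
  rw [Real.norm_of_nonneg (by positivity), one_div, ← sq_abs (n:ℝ)]
  gcongr
  linarith

lemma RD_of_bdd {u : ℤ → ℂ} (h : ∀ N : ℕ, ∃ C, ∀ n : ℤ, |(n:ℝ)| ^ N * ‖u n‖ ≤ C) : RD u := by
  intro N
  obtain ⟨C0, h0⟩ := h 0
  obtain ⟨C, hC⟩ := h (N + 2)
  have hb : ∀ n : ℤ, (1 + |(n:ℝ)|) ^ (N+2) * ‖u n‖ ≤ 2 ^ (N+1) * (C0 + C) := by
    intro n
    have h1 := add_pow_le (zero_le_one (α := ℝ)) (abs_nonneg (n:ℝ)) (N+2)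
    have h2 := h0 n
    have h3 := hC n
    calc (1 + |(n:ℝ)|) ^ (N+2) * ‖u n‖ ≤ (2 ^ (N+1) * (1 ^ (N+2) + |(n:ℝ)| ^ (N+2))) * ‖u n‖ := by
          gcongr; exact h1
      _ = 2 ^ (N+1) * (|(n:ℝ)| ^ 0 * ‖u n‖ + |(n:ℝ)| ^ (N+2) * ‖u n‖) := by simp; ring
      _ ≤ _ := by gcongr
  refine Summable.of_nonneg_of_le (fun n => by positivity) (fun n => ?_)
    (summable_inv_sq.mul_left (2 ^ (N+1) * (C0 + C)))
  have := hb n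
  rw [← div_eq_mul_inv, le_div_iff₀ (by positivity)]
  calc _ = (1 + |(n:ℝ)|) ^ (N+2) * ‖u n‖ := by ring
    _ ≤ _ := this

lemma RD_fCoef (u : ℝ → ℂ) (hu : ContDiff ℝ (⊤ : ℕ∞) u)
    (hp : Function.Periodic u (2 * Real.pi)) : RD (fCoef u) :=
  RD_of_bdd fun N => fCoef_pow_bdd N u hu hp


lemma RD.norm {u : ℤ → ℂ} (hu : RD u) : Summable fun n => ‖u n‖ := by simpa using hu 0

lemma RD.summable {u : ℤ → ℂ} (hu : RD u) : Summable u := hu.norm.of_norm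

lemma RD.bdd {u : ℤ → ℂ} (hu : RD u) : ∃ C, 0 ≤ C ∧ ∀ n, ‖u n‖ ≤ C :=
  ⟨∑' n, ‖u n‖, tsum_nonneg fun _ => norm_nonneg _,
    fun n => hu.norm.le_tsum n fun _ _ => norm_nonneg _⟩

lemma RD.of_le {u v : ℤ → ℂ} (hu : RD u) (h : ∀ n, ‖v n‖ ≤ ‖u n‖) : RD v := fun N =>
  Summable.of_nonneg_of_le (fun n => by positivity) (fun n => by gcongr; exact h n) (hu N)

lemma RD.weight {u : ℤ → ℂ} (hu : RD u) {w : ℤ → ℂ} (hw : ∀ n : ℤ, ‖w n‖ ≤ 1 + |(n:ℝ)|) :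
    RD fun n => w n * u n := by
  intro N
  refine Summable.of_nonneg_of_le (fun n => by positivity) (fun n => ?_) (hu (N+1))
  rw [norm_mul, pow_succ, mul_assoc]
  gcongr
  exact hw n

lemma RD.conj {u : ℤ → ℂ} (hu : RD u) : RD fun n => conj (u n) :=
  hu.of_le fun n => by simp

/-- the shear of `ℤ × ℤ` -/
def shear : ℤ × ℤ ≃ ℤ × ℤ where
  toFun p := (p.1 - p.2, p.2)
  invFun p := (p.1 + p.2, p.2)
  left_inv p := by simp
  right_inv p := by simp

lemma shear_summable {f g : ℤ → ℝ} (hf : Summable f) (hg : Summable g) (hf0 : 0 ≤ f)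
    (hg0 : 0 ≤ g) : Summable fun p : ℤ × ℤ => f (p.1 - p.2) * g p.2 :=
  (shear.summable_iff (f := fun p : ℤ × ℤ => f p.1 * g p.2)).mpr (hf.mul_of_nonneg hg hf0 hg0)

lemma RD.conv_summable {S u : ℤ → ℂ} (hS : RD S) (hu : RD u) :
    Summable fun p : ℤ × ℤ => S (p.1 - p.2) * u p.2 := by
  refine Summable.of_norm ?_
  simpa using shear_summable hS.norm hu.norm (fun _ => norm_nonneg _) (fun _ => norm_nonneg _)

lemma one_add_abs_add (a b : ℝ) : 1 + |a + b| ≤ (1 + |a|) * (1 + |b|) := by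
  nlinarith [abs_add_le a b, abs_nonneg a, abs_nonneg b, mul_nonneg (abs_nonneg a) (abs_nonneg b)]

lemma RD.conv {S u : ℤ → ℂ} (hS : RD S) (hu : RD u) : RD (conv S u) := by
  intro N
  have h := shear_summable (hS N) (hu N) (fun _ => by positivity) (fun _ => by positivity)
  refine Summable.of_nonneg_of_le (fun n => by positivity) (fun m => ?_) h.prod
  have h1 : Summable fun n => ‖S (m - n) * u n‖ := (hS.conv_summable hu).norm.prod_factor m
  calc (1 + |(m:ℝ)|) ^ N * ‖_root_.conv S u m‖
      ≤ (1 + |(m:ℝ)|) ^ N * ∑' n, ‖S (m - n) * u n‖ := by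
        gcongr; exact norm_tsum_le_tsum_norm h1
    _ = ∑' n, (1 + |(m:ℝ)|) ^ N * ‖S (m - n) * u n‖ := by rw [tsum_mul_left]
    _ ≤ _ := by
        refine Summable.tsum_le_tsum (fun n => ?_) (h1.mul_left _) (h.prod_factor m)
        have := one_add_abs_add ((m - n : ℤ) : ℝ) n
        simp only [norm_mul]
        have e : ((m - n : ℤ) : ℝ) + n = m := by push_cast; ring
        rw [e] at this
        calc _ ≤ ((1 + |((m - n : ℤ) : ℝ)|) * (1 + |(n:ℝ)|)) ^ N * (‖S (m - n)‖ * ‖u n‖) := by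
              gcongr
          _ = _ := by rw [mul_pow]; ring

/-- the `ℓ²` inner product -/
def ip (u v : ℤ → ℂ) : ℂ := ∑' n, u n * conj (v n)

/-- hermitian sequences -/
def Herm (S : ℤ → ℂ) : Prop := ∀ n, S (-n) = conj (S n)

lemma RD.mul_bdd {u v : ℤ → ℂ} (hu : RD u) (hv : RD v) : Summable fun n => u n * v n := by
  obtain ⟨C, hC0, hC⟩ := hv.bdd
  refine Summable.of_norm_bounded (hu.norm.mul_right C) fun n => ?_
  rw [norm_mul]
  gcongr
  exact hC n

lemma ip_conv {S u v : ℤ → ℂ} (hS : RD S) (hH : Herm S) (hu : RD u) (hv : RD v) :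
    ip (conv S u) v = ip u (conv S v) := by
  obtain ⟨C, hC0, hC⟩ := hv.bdd
  have h : Summable fun p : ℤ × ℤ => S (p.1 - p.2) * u p.2 * conj (v p.1) := by
    refine Summable.of_norm_bounded ((hS.conv_summable hu).norm.mul_right C) fun p => ?_
    rw [norm_mul]
    gcongr
    simpa using hC p.1
  unfold ip conv
  calc ∑' n, (∑' k, S (n - k) * u k) * conj (v n) = ∑' n, ∑' k, S (n - k) * u k * conj (v n) := by
        simp_rw [tsum_mul_right]
    _ = ∑' k, ∑' n, S (n - k) * u k * conj (v n) := Summable.tsum_comm h.prod_symm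
    _ = _ := by
        congr 1; ext k
        rw [Complex.conj_tsum, ← tsum_mul_left]
        congr 1; ext n
        rw [map_mul, ← hH]
        rw [neg_sub]; ring

lemma ip_weight {w : ℤ → ℂ} (hw : ∀ n, conj (w n) = w n) (u v : ℤ → ℂ) :
    ip (fun n => w n * u n) v = ip u (fun n => w n * v n) := by
  unfold ip
  congr 1; ext n
  rw [map_mul, hw]; ring

lemma conv_assoc {S u : ℤ → ℂ} (hS : RD S) (hu : RD u) :
    conv (conv S S) u = conv S (conv S u) := by
  ext m
  unfold conv
  have h1 : Summable fun p : ℤ × ℤ => ‖S (m - p.1)‖ * (‖S (p.1 - p.2)‖ * ‖u p.2‖) := by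
    obtain ⟨C, hC0, hC⟩ := hS.bdd
    have := ((hS.conv_summable hu).norm.mul_left C)
    refine Summable.of_nonneg_of_le (fun _ => by positivity) (fun p => ?_) this
    rw [norm_mul]
    gcongr
    exact hC _
  have h : Summable fun p : ℤ × ℤ => S (m - p.1) * (S (p.1 - p.2) * u p.2) := by
    refine Summable.of_norm ?_
    simpa using h1
  calc ∑' n, (∑' k, S (m - n - k) * S k) * u n
      = ∑' n, ∑' k, S (m - k) * (S (k - n) * u n) := by
        congr 1; ext n
        rw [← tsum_mul_right, ← (Equiv.subRight n).tsum_eq]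
        congr 1; ext k
        simp only [Equiv.subRight_apply]
        rw [mul_assoc]
        congr 2; ring
    _ = ∑' k, ∑' n, S (m - k) * (S (k - n) * u n) := (Summable.tsum_comm h.prod_symm).symm
    _ = _ := by simp_rw [tsum_mul_left]

/-- squared `ℓ²` norm -/
def nsq (u : ℤ → ℂ) : ℝ := ∑' n, ‖u n‖ ^ 2

lemma nsq_nonneg (u : ℤ → ℂ) : 0 ≤ nsq u := tsum_nonneg fun _ => by positivity

lemma ip_self (u : ℤ → ℂ) : ip u u = (nsq u : ℂ) := by
  unfold ip nsq
  rw [Complex.ofReal_tsum]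
  congr 1; ext n
  rw [Complex.mul_conj']
  push_cast; rfl

lemma RD.sq {u : ℤ → ℂ} (hu : RD u) : Summable fun n => ‖u n‖ ^ 2 := by
  have := (hu.mul_bdd hu).norm
  simpa only [← pow_two, norm_pow] using this

lemma cs_tsum {f g : ℤ → ℂ} (hf : Summable fun n => ‖f n‖ ^ 2) (hg : Summable fun n => ‖g n‖ ^ 2) :
    Summable (fun n => ‖f n‖ * ‖g n‖) ∧
    (∑' n, ‖f n‖ * ‖g n‖) ^ 2 ≤ (∑' n, ‖f n‖ ^ 2) * ∑' n, ‖g n‖ ^ 2 := by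
  have h := Real.inner_le_Lp_mul_Lq_tsum_of_nonneg (f := fun n => ‖f n‖) (g := fun n => ‖g n‖)
    (p := 2) (q := 2) (Real.HolderConjugate.two_two) (fun _ => norm_nonneg _)
    (fun _ => norm_nonneg _) (by simpa using hf) (by simpa using hg)
  refine ⟨Real.summable_mul_of_Lp_Lq_of_nonneg (f := fun n => ‖f n‖) (g := fun n => ‖g n‖)
    (p := 2) (q := 2) (Real.HolderConjugate.two_two) (fun _ => norm_nonneg _)
    (fun _ => norm_nonneg _) (by simpa using hf) (by simpa using hg), ?_⟩
  have h2 := h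
  simp only [Real.rpow_two] at h2
  have h0 : 0 ≤ ∑' n, ‖f n‖ * ‖g n‖ := tsum_nonneg fun _ => by positivity
  have hF : 0 ≤ ∑' n, ‖f n‖ ^ 2 := tsum_nonneg fun _ => by positivity
  have hG : 0 ≤ ∑' n, ‖g n‖ ^ 2 := tsum_nonneg fun _ => by positivity
  rw [← Real.sqrt_eq_rpow, ← Real.sqrt_eq_rpow] at h2
  calc _ ≤ (√(∑' n, ‖f n‖ ^ 2) * √(∑' n, ‖g n‖ ^ 2)) ^ 2 := by gcongr
    _ = _ := by rw [mul_pow, Real.sq_sqrt hF, Real.sq_sqrt hG]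

lemma ip_cs {u v : ℤ → ℂ} (hu : RD u) (hv : RD v) : ‖ip u v‖ ^ 2 ≤ nsq u * nsq v := by
  obtain ⟨h1, h2⟩ := cs_tsum hu.sq hv.sq
  refine le_trans ?_ h2
  gcongr
  unfold ip
  refine (norm_tsum_le_tsum_norm (by simpa using h1)).trans (le_of_eq ?_)
  simp

lemma jensen_seq {b : ℕ → ℝ} (h0 : ∀ i, 0 ≤ b i) (hb0 : b 0 = 1) {c : ℝ}
    (h1 : c ^ 2 ≤ b 1) (hl : ∀ i, b (i+1) ^ 2 ≤ b i * b (i+2)) (k : ℕ) : c ^ (2 * k) ≤ b k := by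
  have step : ∀ i, c ^ 2 * b i ≤ b (i+1) := by
    intro i
    induction i with
    | zero => simpa [hb0] using h1
    | succ i ih =>
      rcases (h0 (i+1)).eq_or_lt with hz | hz
      · rw [← hz, mul_zero]; exact h0 _
      · have h2 := hl i
        have h3 : c ^ 2 * b (i+1) * b (i+1) ≤ b (i+1+1) * b (i+1) := by
          nlinarith [sq_nonneg c, h0 (i+2), mul_le_mul_of_nonneg_right ih (h0 (i+2)),
            mul_le_mul_of_nonneg_left h2 (sq_nonneg c)]
        exact le_of_mul_le_mul_right h3 hz
  induction k with
  | zero => simp [hb0]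
  | succ k ih =>
    calc c ^ (2 * (k+1)) = c ^ 2 * c ^ (2 * k) := by ring
      _ ≤ c ^ 2 * b k := by gcongr
      _ ≤ _ := step k

lemma jensen_sym {R : (ℤ → ℂ) → (ℤ → ℂ)} (hR : ∀ u, RD u → RD (R u))
    (hsym : ∀ u v, RD u → RD v → ip (R u) v = ip u (R v)) {z : ℤ → ℂ} (hz : RD z)
    (hz1 : nsq z = 1) {c : ℝ} (hc : ip (R z) z = c) (k : ℕ) :
    ip (R^[2 * k] z) z = (nsq (R^[k] z) : ℂ) ∧ c ^ (2 * k) ≤ nsq (R^[k] z) := by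
  have hRD : ∀ i, RD (R^[i] z) := by
    intro i
    induction i with
    | zero => exact hz
    | succ i ih => rw [Function.iterate_succ_apply']; exact hR _ ih
  have hsymk : ∀ i u v, RD u → RD v → ip (R^[i] u) v = ip u (R^[i] v) := by
    intro i
    induction i with
    | zero => intros; rfl
    | succ i ih =>
      intro u v hu hv
      rw [Function.iterate_succ_apply, ih _ _ (hR _ hu) hv, hsym _ _ hu,
        Function.iterate_succ_apply']
      clear hsym hc ih
      induction i with
      | zero => exact hv
      | succ i ih => rw [Function.iterate_succ_apply']; exact hR _ ih
  constructor
  · rw [two_mul, Function.iterate_add_apply, hsymk _ _ _ (hRD k) hz, ip_self]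
  · refine jensen_seq (b := fun i => nsq (R^[i] z)) (fun _ => nsq_nonneg _) hz1 ?_ ?_ k
    · have := ip_cs (hRD 1) hz
      rw [hz1, mul_one, Function.iterate_one, hc] at this
      simpa using this
    · intro i
      have := ip_cs (hRD i) (hRD (i+2))
      have e : ip (R^[i] z) (R^[i+2] z) = (nsq (R^[i+1] z) : ℂ) := by
        rw [← ip_self, Function.iterate_succ_apply' R (i+1) z, ← hsym _ _ (hRD i) (hRD (i+1)),
          ← Function.iterate_succ_apply' R]
      rw [e] at this
      simpa using this


/-- products of weights along a path -/
def wProd (w : ℤ → ℂ) (m : ℕ) (j : Fin m → ℤ) (n : ℤ) : ℂ :=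
  ∏ i : Fin m, w (n + ∑ l ∈ Finset.Iio i, j l)

lemma sum_Iio_succ_cons {m : ℕ} (j₀ : ℤ) (j : Fin m → ℤ) (i : Fin m) :
    ∑ l ∈ Finset.Iio i.succ, (Fin.cons j₀ j : Fin (m+1) → ℤ) l =
      j₀ + ∑ l ∈ Finset.Iio i, j l := by
  have h : ∀ (M : ℕ) (i : Fin M) (f : Fin M → ℤ),
      ∑ l ∈ Finset.Iio i, f l = ∑ l, if l < i then f l else 0 := by
    intro M i f
    rw [← Finset.sum_filter]
    congr 1
    ext l; simp
  rw [h, h, Fin.sum_univ_succ]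
  simp

lemma wProd_cons (w : ℤ → ℂ) (m : ℕ) (j₀ : ℤ) (j : Fin m → ℤ) (n : ℤ) :
    wProd w (m+1) (Fin.cons j₀ j) n = w n * wProd w m j (n + j₀) := by
  unfold wProd
  rw [Fin.prod_univ_succ]
  congr 1
  · congr 1
    have : Finset.Iio (0 : Fin (m+1)) = ∅ := by ext l; simp
    rw [this]; simp
  · refine Finset.prod_congr rfl fun i _ => ?_
    rw [sum_Iio_succ_cons, add_assoc]

lemma summable_pi {f : ℤ → ℝ} (hf : Summable f) (hf0 : 0 ≤ f) (m : ℕ) :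
    Summable fun j : Fin m → ℤ => ∏ i, f (j i) := by
  induction m with
  | zero => exact (hasSum_fintype _).summable
  | succ m ih =>
    rw [← (Fin.consEquiv fun _ : Fin (m+1) => ℤ).summable_iff]
    have := hf.mul_of_nonneg ih hf0 (fun j => Finset.prod_nonneg fun i _ => hf0 _)
    refine this.congr fun p => ?_
    simp [Fin.consEquiv, Fin.prod_univ_succ]

lemma one_add_sum_le_prod (m : ℕ) (j : Fin m → ℤ) :
    1 + ∑ i, |(j i : ℝ)| ≤ ∏ i, (1 + |(j i : ℝ)|) := by
  induction m with
  | zero => simp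
  | succ m ih =>
    rw [Fin.sum_univ_succ, Fin.prod_univ_succ]
    have := ih fun i => j i.succ
    have h0 := abs_nonneg (j 0 : ℝ)
    have h1 : 0 ≤ ∑ i : Fin m, |(j i.succ : ℝ)| := Finset.sum_nonneg fun _ _ => abs_nonneg _
    nlinarith [mul_nonneg h0 h1]

lemma abs_partial_le {m : ℕ} (j : Fin m → ℤ) (i : Fin m) :
    |((∑ l ∈ Finset.Iio i, j l : ℤ) : ℝ)| ≤ ∑ i, |(j i : ℝ)| := by
  push_cast
  refine (Finset.abs_sum_le_sum_abs _ _).trans ?_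
  exact Finset.sum_le_sum_of_subset_of_nonneg (Finset.subset_univ _) fun _ _ _ => abs_nonneg _

lemma wProd_bound {w : ℤ → ℂ} (hw : ∀ n : ℤ, ‖w n‖ ≤ 1 + |(n:ℝ)|) (m : ℕ) (j : Fin m → ℤ) (n : ℤ) :
    ‖wProd w m j n‖ ≤ ((1 + |(n:ℝ)|) * ∏ i, (1 + |(j i : ℝ)|)) ^ m := by
  unfold wProd
  rw [norm_prod]
  calc ∏ i, ‖w (n + ∑ l ∈ Finset.Iio i, j l)‖
      ≤ ∏ i : Fin m, ((1 + |(n:ℝ)|) * ∏ i, (1 + |(j i : ℝ)|)) := by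
        refine Finset.prod_le_prod (fun _ _ => norm_nonneg _) fun i _ => ?_
        refine (hw _).trans ?_
        rw [Int.cast_add]
        refine (one_add_abs_add _ _).trans ?_
        gcongr
        refine le_trans ?_ (one_add_sum_le_prod m j)
        gcongr
        exact abs_partial_le j i
    _ = _ := by simp

/-- path summand -/
def pTerm (w A u v : ℤ → ℂ) (m : ℕ) (p : ℤ × (Fin m → ℤ)) : ℂ :=
  wProd w m p.2 p.1 * (∏ i, A (p.2 i)) * u p.1 * v (p.1 + ∑ i, p.2 i)

lemma pTerm_summable {w A u v : ℤ → ℂ} (hw : ∀ n : ℤ, ‖w n‖ ≤ 1 + |(n:ℝ)|) (hA : RD A)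
    (hu : RD u) (hv : RD v) (m : ℕ) : Summable (pTerm w A u v m) := by
  obtain ⟨C, hC0, hC⟩ := hv.bdd
  have h := ((hu m).mul_of_nonneg (summable_pi (hA m) (fun _ => by positivity) m)
    (fun _ => by positivity) (fun _ => by positivity)).mul_right C
  refine Summable.of_norm_bounded h fun p => ?_
  unfold pTerm
  rw [norm_mul, norm_mul, norm_mul, norm_prod]
  calc _ ≤ ((1 + |(p.1:ℝ)|) * ∏ i, (1 + |(p.2 i : ℝ)|)) ^ m * (∏ i, ‖A (p.2 i)‖) * ‖u p.1‖ * C := by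
        gcongr
        · exact wProd_bound hw _ _ _
        · exact hC _
    _ = _ := by
        rw [mul_pow, Finset.prod_mul_distrib, Finset.prod_pow]; ring

/-- one step operator -/
def stepOp (w A u : ℤ → ℂ) : ℤ → ℂ := conv A fun n => w n * u n

lemma RD.stepOp {w A u : ℤ → ℂ} (hw : ∀ n : ℤ, ‖w n‖ ≤ 1 + |(n:ℝ)|) (hA : RD A)
    (hu : RD u) : RD (stepOp w A u) := hA.conv (hu.weight hw)

/-- reindexing of paths: `(n, j₀ :: j)` corresponds to `((n + j₀, j), n)` -/
def pathEquiv (m : ℕ) : (ℤ × (Fin m → ℤ)) × ℤ ≃ ℤ × (Fin (m+1) → ℤ) where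
  toFun p := (p.2, Fin.cons (p.1.1 - p.2) p.1.2)
  invFun q := ((q.1 + q.2 0, Fin.tail q.2), q.1)
  left_inv p := by simp
  right_inv q := by simp

lemma pTerm_tsum {w A v : ℤ → ℂ} (hw : ∀ n : ℤ, ‖w n‖ ≤ 1 + |(n:ℝ)|) (hA : RD A)
    (hv : RD v) (m : ℕ) : ∀ u : ℤ → ℂ, RD u →
    ∑' p, pTerm w A u v m p = ∑' n, ((stepOp w A)^[m] u) n * v n := by
  induction m with
  | zero =>
    intro u hu
    rw [← (Equiv.prodUnique ℤ (Fin 0 → ℤ)).symm.tsum_eq]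
    simp [pTerm, wProd]
  | succ m ih =>
    intro u hu
    rw [Function.iterate_succ_apply, ← ih _ (RD.stepOp hw hA hu), ← (pathEquiv m).tsum_eq]
    have hs := (pathEquiv m).summable_iff.mpr (pTerm_summable hw hA hu hv (m+1))
    rw [Summable.tsum_prod (f := fun c => pTerm w A u v (m+1) ((pathEquiv m) c)) hs]
    congr 1; ext p
    simp only [pTerm, pathEquiv, Equiv.coe_fn_mk, wProd_cons, Fin.prod_univ_succ, Fin.sum_univ_succ,
      Fin.cons_zero, Fin.cons_succ, stepOp, conv]
    rw [← tsum_mul_left, ← tsum_mul_right]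
    congr 1; ext n
    have e1 : n + (p.1 - n) = p.1 := by ring
    have e2 : n + (p.1 - n + ∑ i, p.2 i) = p.1 + ∑ i, p.2 i := by ring
    rw [e1, e2]
    ring

lemma prodPoly_eq (m : ℕ) (j : Fin m → ℤ) (n : ℤ) :
    ((prodPoly m j n : ℤ) : ℂ) = wProd (fun n => (n : ℂ)) m j n := by
  unfold prodPoly wProd
  push_cast; rfl

lemma abs_prodPoly_eq (m : ℕ) (j : Fin m → ℤ) (n : ℤ) :
    ((|prodPoly m j n| : ℤ) : ℂ) = wProd (fun n => ((|n| : ℤ) : ℂ)) m j n := by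
  unfold prodPoly wProd
  rw [Finset.abs_prod, Int.cast_prod]

lemma prodPoly_nonneg {m : ℕ} (hm : Even m) (j : Fin m → ℤ) (n : ℤ)
    (h : ∑ i, |j i| < |n|) : 0 ≤ prodPoly m j n := by
  have hp : ∀ i : Fin m, |∑ l ∈ Finset.Iio i, j l| ≤ ∑ i, |j i| := fun i =>
    (Finset.abs_sum_le_sum_abs _ _).trans
      (Finset.sum_le_sum_of_subset_of_nonneg (Finset.subset_univ _) fun _ _ _ => abs_nonneg _)
  unfold prodPoly
  rcases le_total 0 n with hn | hn
  · rw [abs_of_nonneg hn] at h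
    refine Finset.prod_nonneg fun i _ => ?_
    have := abs_le.mp (hp i)
    linarith
  · rw [abs_of_nonpos hn] at h
    have e : ∏ i : Fin m, (n + ∑ l ∈ Finset.Iio i, j l)
        = ∏ i : Fin m, (-(n + ∑ l ∈ Finset.Iio i, j l)) := by
      rw [Finset.prod_neg]; simp [hm.neg_one_pow]
    rw [e]
    refine Finset.prod_nonneg fun i _ => ?_
    have := abs_le.mp (hp i)
    linarith

/-- weight of a path in the zeta invariant -/
def zW (A : ℤ → ℂ) (m : ℕ) (p : ℤ × (Fin m → ℤ)) : ℂ :=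
  ((|prodPoly m p.2 p.1| - prodPoly m p.2 p.1 : ℤ) : ℂ) * ∏ i, A (p.2 i)

lemma norm_intCast_le (n : ℤ) : ‖(n : ℂ)‖ ≤ 1 + |(n:ℝ)| := by
  rw [Complex.norm_intCast]; linarith

lemma norm_absCast_le (n : ℤ) : ‖((|n| : ℤ) : ℂ)‖ ≤ 1 + |(n:ℝ)| := by
  rw [Complex.norm_intCast]; simp

lemma zW_summable {A : ℤ → ℂ} (hA : RD A) {m : ℕ} (hm : Even m) : Summable (zW A m) := by
  have h := (summable_inv_sq.mul_of_nonneg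
    (summable_pi (hA (m + m + 2)) (fun _ => by positivity) m)
    (fun _ => by positivity) (fun _ => by positivity)).mul_left 2
  refine Summable.of_norm_bounded h fun p => ?_
  obtain ⟨n, j⟩ := p
  simp only [zW]
  rw [norm_mul, norm_prod, Finset.prod_mul_distrib, Finset.prod_pow]
  have hP : 0 ≤ ∏ i, (1 + |(j i : ℝ)|) := Finset.prod_nonneg fun _ _ => by positivity
  by_cases hn : ∑ i, |j i| < |n|
  · rw [abs_of_nonneg (prodPoly_nonneg hm j n hn)]
    simp only [sub_self, Int.cast_zero, norm_zero, zero_mul]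
    positivity
  · rw [not_lt] at hn
    have hn' : 1 + |(n:ℝ)| ≤ ∏ i, (1 + |(j i : ℝ)|) := by
      refine le_trans ?_ (one_add_sum_le_prod m j)
      gcongr
      exact_mod_cast hn
    have hb : ‖((|prodPoly m j n| - prodPoly m j n : ℤ) : ℂ)‖
        ≤ 2 * ((1 + |(n:ℝ)|) * ∏ i, (1 + |(j i : ℝ)|)) ^ m := by
      rw [Int.cast_sub, abs_prodPoly_eq, prodPoly_eq]
      refine (norm_sub_le _ _).trans ?_
      have h1 := wProd_bound norm_absCast_le m j n
      have h2 := wProd_bound norm_intCast_le m j n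
      linarith
    set P := ∏ i, (1 + |(j i : ℝ)|) with hPdef
    have hx : 0 < 1 + |(n:ℝ)| := by positivity
    calc _ ≤ 2 * ((1 + |(n:ℝ)|) * P) ^ m * ∏ i, ‖A (j i)‖ := by gcongr
      _ ≤ 2 * (P * P) ^ m * (((1 + |(n:ℝ)|) ^ 2)⁻¹ * P ^ 2) * ∏ i, ‖A (j i)‖ := by
          have : 1 ≤ ((1 + |(n:ℝ)|) ^ 2)⁻¹ * P ^ 2 := by
            rw [inv_mul_eq_div, one_le_div (by positivity)]
            gcongr
          refine mul_le_mul_of_nonneg_right ?_ (by positivity)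
          calc 2 * ((1 + |(n:ℝ)|) * P) ^ m ≤ 2 * (P * P) ^ m := by gcongr
            _ ≤ _ := le_mul_of_one_le_right (by positivity) this
      _ = _ := by rw [mul_pow]; ring

lemma zW_tsum_split {A u v : ℤ → ℂ} (hA : RD A) (hu : RD u) (hv : RD v) (m : ℕ) :
    ∑' p : ℤ × (Fin m → ℤ), zW A m p * (u p.1 * v (p.1 + ∑ i, p.2 i)) =
      ∑' n, ((stepOp (fun n => ((|n| : ℤ) : ℂ)) A)^[m] u) n * v n -
      ∑' n, ((stepOp (fun n => (n : ℂ)) A)^[m] u) n * v n := by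
  rw [← pTerm_tsum norm_absCast_le hA hv m u hu, ← pTerm_tsum norm_intCast_le hA hv m u hu,
    ← (pTerm_summable norm_absCast_le hA hu hv m).tsum_sub
      (pTerm_summable norm_intCast_le hA hu hv m)]
  congr 1; ext p
  simp only [zW, pTerm]
  rw [Int.cast_sub, abs_prodPoly_eq, prodPoly_eq]
  ring

lemma tsum_subtype_swap {J : Type*} (s : J → Prop) [DecidablePred s] (F : ℤ × J → ℂ)
    (hF : Summable F) :
    ∑' j : {j : J // s j}, ∑' n, F (n, j.val) = ∑' p : ℤ × J, F p * (if s p.2 then 1 else 0) := by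
  have hs' : Summable fun p : ℤ × J => F p * (if s p.2 then 1 else 0) := by
    refine Summable.of_norm_bounded hF.norm fun p => ?_
    rw [norm_mul]
    split_ifs <;> simp
  have h1 := tsum_subtype {j : J | s j} (fun j => ∑' n, F (n, j))
  refine h1.trans ?_
  rw [hs'.tsum_prod, ← Summable.tsum_comm (f := fun n j => F (n, j) * (if s j then 1 else 0))
    hs']
  congr 1; ext j
  by_cases hj : s j
  · simp [hj]
  · simp [hj]

lemma ZetaInv_eq {a : ℝ → ℝ} (hA : RD (fCoef fun θ => (a θ : ℂ))) (k : ℕ) :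
    ZetaInv k a = ∑' p : ℤ × (Fin (2*k) → ℤ),
      zW (fCoef fun θ => (a θ : ℂ)) (2*k) p * (if ∑ i, p.2 i = 0 then 1 else 0) := by
  rw [← tsum_subtype_swap (fun j : Fin (2*k) → ℤ => ∑ i, j i = 0) _
    (zW_summable hA (even_two_mul k))]
  unfold ZetaInv
  refine tsum_congr fun j => ?_
  simp only [zetaTerm, zW, Ncoef]
  rw [tsum_mul_right, Complex.ofReal_tsum]
  congr 1


/-- the standing hypotheses -/
structure Hyp (a : ℝ → ℝ) : Prop where
  smooth : ContDiff ℝ (⊤ : ℕ∞) a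
  per : Function.Periodic a (2 * Real.pi)
  pos : ∀ θ, 0 < a θ
  norm : (∫ θ in (0:ℝ)..(2 * Real.pi), (a θ)⁻¹) = 2 * Real.pi

namespace Hyp

variable {a : ℝ → ℝ}

lemma cont (h : Hyp a) : Continuous a := h.smooth.continuous

lemma smooth_inv (h : Hyp a) : ContDiff ℝ (⊤ : ℕ∞) fun θ => (a θ)⁻¹ :=
  h.smooth.inv fun θ => (h.pos θ).ne'

lemma cont_inv (h : Hyp a) : Continuous fun θ => (a θ)⁻¹ := h.smooth_inv.continuous

lemma B_deriv (h : Hyp a) (θ : ℝ) : HasDerivAt (Bfun a) (a θ)⁻¹ θ :=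
  intervalIntegral.integral_hasDerivAt_right (h.cont_inv.intervalIntegrable _ _)
    (h.cont_inv.stronglyMeasurableAtFilter _ _) h.cont_inv.continuousAt

lemma B_smooth (h : Hyp a) : ContDiff ℝ (⊤ : ℕ∞) (Bfun a) := by
  rw [contDiff_infty_iff_deriv]
  refine ⟨fun θ => (h.B_deriv θ).differentiableAt, ?_⟩
  have : deriv (Bfun a) = fun θ => (a θ)⁻¹ := funext fun θ => (h.B_deriv θ).deriv
  rw [this]
  exact h.smooth_inv

lemma B_cont (h : Hyp a) : Continuous (Bfun a) := h.B_smooth.continuous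

lemma B_zero : Bfun a 0 = 0 := by simp [Bfun]

lemma B_add (h : Hyp a) (θ : ℝ) : Bfun a (θ + 2 * Real.pi) = Bfun a θ + 2 * Real.pi := by
  have hp : Function.Periodic (fun θ => (a θ)⁻¹) (2 * Real.pi) := fun θ => by
    simp only [h.per θ]
  have h1 := hp.intervalIntegral_add_eq θ 0
  unfold Bfun
  rw [← intervalIntegral.integral_add_adjacent_intervals
    (h.cont_inv.intervalIntegrable 0 θ) (h.cont_inv.intervalIntegrable θ _), h1, zero_add, h.norm]

lemma B_two_pi (h : Hyp a) : Bfun a (2 * Real.pi) = 2 * Real.pi := h.norm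

lemma B_strictMono (h : Hyp a) : StrictMono (Bfun a) :=
  strictMono_of_deriv_pos fun θ => by
    rw [(h.B_deriv θ).deriv]; exact inv_pos.mpr (h.pos θ)

lemma B_surj (h : Hyp a) : Function.Surjective (Bfun a) := by
  have hg : Function.Periodic (fun θ => Bfun a θ - θ) (2 * Real.pi) := fun θ => by
    simp only [h.B_add]; ring
  have hn : ∀ n : ℤ, Bfun a (n * (2 * Real.pi)) = n * (2 * Real.pi) := by
    intro n
    have := hg.int_mul n 0
    simp only [zero_add, B_zero, sub_zero] at this
    linarith
  intro x
  have hpi : 0 < 2 * Real.pi := by positivity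
  set n := ⌊x / (2 * Real.pi)⌋
  have h1 : (n:ℝ) * (2 * Real.pi) ≤ x := by
    rw [← le_div_iff₀ hpi]; exact Int.floor_le _
  have h2 : x ≤ ((n + 1 : ℤ):ℝ) * (2 * Real.pi) := by
    rw [← div_le_iff₀ hpi]; push_cast; exact (Int.lt_floor_add_one _).le
  have := intermediate_value_Icc (a := (n:ℝ) * (2 * Real.pi))
    (b := ((n + 1 : ℤ):ℝ) * (2 * Real.pi)) (h1.trans h2) h.B_cont.continuousOn
  rw [hn, hn] at this
  obtain ⟨y, _, hy⟩ := this ⟨h1, h2⟩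
  exact ⟨y, hy⟩

/-- the inverse diffeomorphism -/
def Th (h : Hyp a) : ℝ ≃o ℝ := (h.B_strictMono.orderIsoOfSurjective _ h.B_surj).symm

lemma Th_B (h : Hyp a) (θ : ℝ) : h.Th (Bfun a θ) = θ :=
  (h.B_strictMono.orderIsoOfSurjective _ h.B_surj).symm_apply_apply θ

lemma B_Th (h : Hyp a) (x : ℝ) : Bfun a (h.Th x) = x :=
  (h.B_strictMono.orderIsoOfSurjective _ h.B_surj).apply_symm_apply x

lemma Th_cont (h : Hyp a) : Continuous h.Th := h.Th.continuous

lemma Th_add (h : Hyp a) (x : ℝ) : h.Th (x + 2 * Real.pi) = h.Th x + 2 * Real.pi := by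
  apply h.B_strictMono.injective
  rw [h.B_Th, h.B_add, h.B_Th]

lemma change_var (h : Hyp a) {G : ℝ → ℂ} (hG : Continuous G) :
    ∫ x in (0:ℝ)..(2 * Real.pi), G x =
      ∫ θ in (0:ℝ)..(2 * Real.pi), G (Bfun a θ) * ((a θ)⁻¹ : ℝ) := by
  have := intervalIntegral.integral_deriv_smul_comp (a := 0) (b := 2 * Real.pi) (f := Bfun a)
    (f' := fun θ => (a θ)⁻¹) (g := G) (fun x _ => h.B_deriv x) h.cont_inv.continuousOn hG
  rw [B_zero, h.B_two_pi] at this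
  rw [← this]
  refine intervalIntegral.integral_congr fun x _ => ?_
  simp only [Function.comp, Complex.real_smul]
  ring

/-- powers of `ψ` -/
def psi (a : ℝ → ℝ) (l : ℤ) (θ : ℝ) : ℂ := Complex.exp (Complex.I * l * Bfun a θ)

lemma psi_smooth (h : Hyp a) (l : ℤ) : ContDiff ℝ (⊤ : ℕ∞) (psi a l) := by
  unfold psi
  have : ContDiff ℝ (⊤ : ℕ∞) fun θ => ((Bfun a θ : ℝ) : ℂ) :=
    Complex.ofRealCLM.contDiff.comp h.B_smooth
  exact (contDiff_const.mul this).cexp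

lemma psi_per (h : Hyp a) (l : ℤ) : Function.Periodic (psi a l) (2 * Real.pi) := by
  intro θ
  unfold psi
  rw [h.B_add]
  exact exp_periodic l (Bfun a θ)

lemma psi_deriv (h : Hyp a) (l : ℤ) :
    deriv (psi a l) = fun θ => Complex.I * l * (psi a l θ * ((a θ)⁻¹ : ℝ)) := by
  ext θ
  have h1 : HasDerivAt (fun θ => Complex.I * l * ((Bfun a θ : ℝ) : ℂ))
      (Complex.I * l * ((a θ)⁻¹ : ℝ)) θ := ((h.B_deriv θ).ofReal_comp).const_mul _
  rw [show psi a l = fun θ => Complex.exp (Complex.I * l * ((Bfun a θ : ℝ) : ℂ)) from rfl,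
    h1.cexp.deriv]
  ring

lemma psi_conj_mul (l : ℤ) (θ : ℝ) : psi a l θ * conj (psi a l θ) = 1 := by
  unfold psi
  rw [← Complex.exp_conj, ← Complex.exp_add]
  simp

lemma psi_conj (l : ℤ) (θ : ℝ) : conj (psi a l θ) = Complex.exp (-Complex.I * l * Bfun a θ) := by
  unfold psi
  rw [← Complex.exp_conj]
  simp

/-- real smooth factor -/
lemma factor_smooth {f : ℝ → ℝ} (hf : ContDiff ℝ (⊤ : ℕ∞) f) :
    ContDiff ℝ (⊤ : ℕ∞) fun θ => (f θ : ℂ) := Complex.ofRealCLM.contDiff.comp hf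

/-- coefficients of `ψ^l` -/
def p (a : ℝ → ℝ) (l : ℤ) : ℤ → ℂ := fCoef (psi a l)
/-- coefficients of `ψ^l / a` -/
def q (a : ℝ → ℝ) (l : ℤ) : ℤ → ℂ := fCoef fun θ => psi a l θ * ((a θ)⁻¹ : ℝ)
/-- coefficients of `ψ^l / √a` -/
def z (a : ℝ → ℝ) (l : ℤ) : ℤ → ℂ := fCoef fun θ => ((√(a θ) : ℝ) : ℂ) * (psi a l θ * ((a θ)⁻¹ : ℝ))
/-- coefficients of `√a` -/
def S (a : ℝ → ℝ) : ℤ → ℂ := fCoef fun θ => ((√(a θ) : ℝ) : ℂ)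
/-- coefficients of `a` -/
def A (a : ℝ → ℝ) : ℤ → ℂ := fCoef fun θ => (a θ : ℂ)

lemma sqrt_smooth (h : Hyp a) : ContDiff ℝ (⊤ : ℕ∞) fun θ => ((√(a θ) : ℝ) : ℂ) :=
  factor_smooth (h.smooth.sqrt fun θ => (h.pos θ).ne')

lemma sqrt_per (h : Hyp a) : Function.Periodic (fun θ => ((√(a θ) : ℝ) : ℂ)) (2 * Real.pi) :=
  fun θ => by simp only [h.per θ]

lemma q_smooth (h : Hyp a) (l : ℤ) :
    ContDiff ℝ (⊤ : ℕ∞) fun θ => psi a l θ * (((a θ)⁻¹ : ℝ) : ℂ) :=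
  (h.psi_smooth l).mul (factor_smooth h.smooth_inv)

lemma q_per (h : Hyp a) (l : ℤ) :
    Function.Periodic (fun θ => psi a l θ * (((a θ)⁻¹ : ℝ) : ℂ)) (2 * Real.pi) :=
  fun θ => by simp only [h.per θ, h.psi_per l θ]

lemma RD_p (h : Hyp a) (l : ℤ) : RD (p a l) := RD_fCoef _ (h.psi_smooth l) (h.psi_per l)
lemma RD_q (h : Hyp a) (l : ℤ) : RD (q a l) := RD_fCoef _ (h.q_smooth l) (h.q_per l)
lemma RD_S (h : Hyp a) : RD (S a) := RD_fCoef _ h.sqrt_smooth h.sqrt_per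
lemma RD_A (h : Hyp a) : RD (A a) :=
  RD_fCoef _ (factor_smooth h.smooth) fun θ => by simp only [h.per θ]

lemma z_eq (h : Hyp a) (l : ℤ) : z a l = conv (S a) (q a l) :=
  fCoef_mul_eq _ _ h.sqrt_smooth.continuous h.sqrt_per (h.q_smooth l).continuous (h.q_per l)

lemma RD_z (h : Hyp a) (l : ℤ) : RD (z a l) := by
  rw [h.z_eq]; exact h.RD_S.conv (h.RD_q l)

lemma A_eq (h : Hyp a) : A a = conv (S a) (S a) := by
  unfold S
  rw [← fCoef_mul_eq _ _ h.sqrt_smooth.continuous h.sqrt_per h.sqrt_smooth.continuous h.sqrt_per]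
  unfold A
  congr 1; ext θ
  rw [← Complex.ofReal_mul, Real.mul_self_sqrt (h.pos θ).le]

lemma conv_A (h : Hyp a) {u : ℤ → ℂ} (hu : RD u) : conv (A a) u = conv (S a) (conv (S a) u) := by
  rw [h.A_eq, conv_assoc h.RD_S hu]

lemma p_eq (h : Hyp a) (l : ℤ) : p a l = conv (S a) (z a l) := by
  rw [h.z_eq, ← h.conv_A (h.RD_q l)]
  unfold A q
  rw [← fCoef_mul_eq _ _ (factor_smooth h.smooth).continuous (fun θ => by simp only [h.per θ])
    (h.q_smooth l).continuous (h.q_per l)]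
  unfold p
  congr 1; ext θ
  have : (a θ : ℂ) ≠ 0 := by exact_mod_cast (h.pos θ).ne'
  push_cast
  field_simp

lemma Herm_S : Herm (S a) := by
  intro n
  unfold S
  rw [fCoef_conj]
  congr 1; ext θ
  exact (Complex.conj_ofReal _).symm

lemma fCoef_const_mul (c : ℂ) (u : ℝ → ℂ) (n : ℤ) :
    fCoef (fun θ => c * u θ) n = c * fCoef u n := by
  unfold fCoef
  simp_rw [mul_assoc c, intervalIntegral.integral_const_mul]
  ring

lemma pq (h : Hyp a) (l m : ℤ) : (m : ℂ) * p a l m = l * q a l m := by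
  have h1 := fCoef_deriv (psi a l) ((h.psi_smooth l).of_le (by exact_mod_cast le_top))
    (h.psi_per l) m
  rw [h.psi_deriv, fCoef_const_mul, mul_assoc, mul_assoc] at h1
  exact (mul_left_cancel₀ Complex.I_ne_zero h1).symm

lemma ip_pq (h : Hyp a) (l : ℤ) : ip (p a l) (q a l) = 1 := by
  have h1 := parseval _ _ (h.psi_smooth l).continuous (h.psi_per l) (h.q_smooth l).continuous
    (h.q_per l)
  refine h1.tsum_eq.trans ?_
  have : ∀ θ, psi a l θ * conj (psi a l θ * ((a θ)⁻¹ : ℝ)) = (((a θ)⁻¹ : ℝ) : ℂ) := by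
    intro θ
    rw [map_mul, ← mul_assoc, psi_conj_mul, Complex.conj_ofReal, one_mul]
  simp_rw [this]
  rw [intervalIntegral.integral_ofReal, h.norm]
  have : (Real.pi : ℂ) ≠ 0 := by exact_mod_cast Real.pi_ne_zero
  push_cast
  field_simp

/-- exponentials -/
def ex (m : ℤ) (θ : ℝ) : ℂ := Complex.exp (Complex.I * m * θ)

lemma ex_cont (m : ℤ) : Continuous (ex m) := by unfold ex; fun_prop

lemma Th_per (h : Hyp a) {f : ℝ → ℂ} (hf : Function.Periodic f (2 * Real.pi)) :
    Function.Periodic (fun x => f (h.Th x)) (2 * Real.pi) := fun x => by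
  simp only [h.Th_add, hf (h.Th x)]

lemma fCoef_Th (h : Hyp a) {f : ℝ → ℂ} (hf : Continuous f) (l : ℤ) :
    fCoef (fun x => f (h.Th x)) l =
      (2 * Real.pi)⁻¹ * ∫ θ in (0:ℝ)..(2 * Real.pi), f θ * conj (psi a l θ) * ((a θ)⁻¹ : ℝ) := by
  have := h.Th_cont
  unfold fCoef
  rw [h.change_var (by fun_prop)]
  simp only [h.Th_B, psi_conj]

lemma conj_integral (f : ℝ → ℂ) : conj (((2 * Real.pi : ℝ)⁻¹ : ℂ) * ∫ θ in (0:ℝ)..(2 * Real.pi), f θ)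
    = ((2 * Real.pi : ℝ)⁻¹ : ℂ) * ∫ θ in (0:ℝ)..(2 * Real.pi), conj (f θ) := by
  have h2 : (0:ℝ) ≤ 2 * Real.pi := by positivity
  rw [map_mul, intervalIntegral.integral_of_le h2, ← integral_conj,
    ← intervalIntegral.integral_of_le h2]
  congr 1
  rw [map_inv₀, Complex.conj_ofReal]

lemma conj_q (h : Hyp a) (l m : ℤ) : conj (q a l m) = fCoef (fun x => ex m (h.Th x)) l := by
  rw [h.fCoef_Th (ex_cont m), q, fCoef_conj]
  unfold fCoef
  congr 1
  refine intervalIntegral.integral_congr fun θ _ => ?_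
  simp only [map_mul, Complex.conj_ofReal, ex]
  push_cast
  ring_nf

lemma conj_p (h : Hyp a) (l n : ℤ) :
    conj (p a l n) = fCoef (fun x => (fun θ => (a θ : ℂ) * ex n θ) (h.Th x)) l := by
  have := h.cont
  have := ex_cont n
  rw [h.fCoef_Th (f := fun θ => (a θ : ℂ) * ex n θ) (by fun_prop), p, fCoef_conj]
  unfold fCoef
  congr 1
  refine intervalIntegral.integral_congr fun θ _ => ?_
  have : (a θ : ℂ) ≠ 0 := by exact_mod_cast (h.pos θ).ne'
  simp only [ex]
  push_cast
  field_simp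

lemma int_ex (k : ℤ) : ((2 * Real.pi : ℝ)⁻¹ : ℂ) * ∫ θ in (0:ℝ)..(2 * Real.pi), ex k θ =
    if k = 0 then 1 else 0 := by
  have hpi : (Real.pi : ℂ) ≠ 0 := by exact_mod_cast Real.pi_ne_zero
  split_ifs with hk
  · subst hk
    simp [ex]
    field_simp
  · have hc : Complex.I * (k:ℂ) ≠ 0 := mul_ne_zero Complex.I_ne_zero (by exact_mod_cast hk)
    have := integral_exp_mul_complex (a := 0) (b := 2 * Real.pi) hc
    unfold ex
    rw [this]
    have h1 := exp_periodic k 0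
    simp only [zero_add] at h1
    rw [h1]
    simp

lemma ex_conj (m : ℤ) (θ : ℝ) : conj (ex m θ) = ex (-m) θ := by
  unfold ex
  rw [← Complex.exp_conj]
  simp

lemma ex_mul (m n : ℤ) (θ : ℝ) : ex m θ * ex n θ = ex (m + n) θ := by
  unfold ex
  rw [← Complex.exp_add]
  congr 1; push_cast; ring

lemma aex_per (h : Hyp a) (n : ℤ) :
    Function.Periodic (fun θ => (a θ : ℂ) * ex n θ) (2 * Real.pi) := fun θ => by
  have := exp_periodic n θ
  simp only [ex, h.per θ] at *
  rw [this]

lemma complete (h : Hyp a) (n m : ℤ) :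
    HasSum (fun l => p a l n * conj (q a l m)) (if n = m then 1 else 0) := by
  have hT := h.Th_cont
  have ha := h.cont
  have h1 := ex_cont m
  have h2 := ex_cont n
  have hc : Continuous fun θ => (a θ : ℂ) * ex n θ := by fun_prop
  have := parseval (fun x => ex m (h.Th x)) (fun x => (fun θ => (a θ : ℂ) * ex n θ) (h.Th x))
    (by fun_prop) (h.Th_per (exp_periodic m)) (hc.comp hT) (h.Th_per (h.aex_per n))
  simp_rw [← h.conj_q, ← h.conj_p, Complex.conj_conj] at this
  convert! this using 1
  · ext l; ring
  · have hG : Continuous fun x => ex m (h.Th x) * conj ((a (h.Th x) : ℂ) * ex n (h.Th x)) := by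
      fun_prop
    rw [h.change_var hG]
    have e : ∀ θ, ex m (h.Th (Bfun a θ)) * conj ((a (h.Th (Bfun a θ)) : ℂ) *
        ex n (h.Th (Bfun a θ))) * ((a θ)⁻¹ : ℝ) = ex (m - n) θ := by
      intro θ
      have : (a θ : ℂ) ≠ 0 := by exact_mod_cast (h.pos θ).ne'
      rw [h.Th_B, map_mul, ex_conj, Complex.conj_ofReal, sub_eq_add_neg, ← ex_mul]
      push_cast
      field_simp
    simp_rw [e]
    have := int_ex (m - n)
    rw [Complex.ofReal_inv, this]
    simp only [sub_eq_zero, eq_comm]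

lemma complete_bound (h : Hyp a) : ∃ C, ∀ n m : ℤ,
    Summable (fun l => ‖p a l n‖ * ‖q a l m‖) ∧ ∑' l, ‖p a l n‖ * ‖q a l m‖ ≤ C := by
  have hT := h.Th_cont
  have ha := h.cont
  set K : ℝ := (2 * Real.pi)⁻¹ * ∫ x in (0:ℝ)..(2 * Real.pi), (a (h.Th x)) ^ 2
  have hex : ∀ m x, ex m x * conj (ex m x) = 1 := by
    intro m x
    rw [ex_conj, ex_mul]; simp [ex]
  have hq : ∀ m, HasSum (fun l => ‖q a l m‖ ^ 2) 1 := by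
    intro m
    have h1 := ex_cont m
    have := parseval (fun x => ex m (h.Th x)) (fun x => ex m (h.Th x))
      (by fun_prop) (h.Th_per (exp_periodic m)) (by fun_prop) (h.Th_per (exp_periodic m))
    simp_rw [← h.conj_q, hex, Complex.mul_conj'] at this
    have e : (((2 * Real.pi)⁻¹ : ℝ) : ℂ) * ∫ θ in (0:ℝ)..(2 * Real.pi), (1:ℂ) = ((1:ℝ):ℂ) := by
      have hpi : (Real.pi : ℂ) ≠ 0 := by exact_mod_cast Real.pi_ne_zero
      simp
      field_simp
    rw [e] at this
    have := Complex.hasSum_ofReal.mp (by exact_mod_cast this :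
      HasSum (fun l => ((‖conj (q a l m)‖ ^ 2 : ℝ) : ℂ)) ((1:ℝ):ℂ))
    simpa using this
  have hp : ∀ n, HasSum (fun l => ‖p a l n‖ ^ 2) K := by
    intro n
    have h1 := ex_cont n
    have hc : Continuous fun θ => (a θ : ℂ) * ex n θ := by fun_prop
    have := parseval (fun x => (fun θ => (a θ : ℂ) * ex n θ) (h.Th x))
      (fun x => (fun θ => (a θ : ℂ) * ex n θ) (h.Th x))
      (hc.comp hT) (h.Th_per (h.aex_per n)) (hc.comp hT) (h.Th_per (h.aex_per n))
    have e : ∀ x, (fun θ => (a θ : ℂ) * ex n θ) (h.Th x) *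
        conj ((fun θ => (a θ : ℂ) * ex n θ) (h.Th x)) = (((a (h.Th x)) ^ 2 : ℝ) : ℂ) := by
      intro x
      simp only [map_mul, Complex.conj_ofReal]
      rw [mul_mul_mul_comm, hex]
      push_cast; ring
    simp_rw [← h.conj_p, e, Complex.mul_conj'] at this
    rw [intervalIntegral.integral_ofReal, ← Complex.ofReal_mul] at this
    have := Complex.hasSum_ofReal.mp (by exact_mod_cast this :
      HasSum (fun l => ((‖conj (p a l n)‖ ^ 2 : ℝ) : ℂ)) ((K:ℝ):ℂ))
    simpa using this
  refine ⟨√(K * 1), fun n m => ?_⟩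
  obtain ⟨h1, h2⟩ := cs_tsum (f := fun l => p a l n) (g := fun l => q a l m)
    (hp n).summable (hq m).summable
  refine ⟨h1, ?_⟩
  rw [(hp n).tsum_eq, (hq m).tsum_eq] at h2
  exact Real.le_sqrt_of_sq_le h2

end Hyp


namespace Hyp

variable {a : ℝ → ℝ}

lemma zeta_hasSum (h : Hyp a) (k : ℕ) :
    HasSum (fun l : ℤ => ∑' p : ℤ × (Fin (2*k) → ℤ),
      zW (A a) (2*k) p * (Hyp.p a l p.1 * conj (q a l (p.1 + ∑ i, p.2 i)))) (ZetaInv k a) := by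
  obtain ⟨C, hC⟩ := h.complete_bound
  have hz := zW_summable h.RD_A (even_two_mul k)
  set F : (ℤ × (Fin (2*k) → ℤ)) × ℤ → ℂ := fun x =>
    zW (A a) (2*k) x.1 * (Hyp.p a x.2 x.1.1 * conj (q a x.2 (x.1.1 + ∑ i, x.1.2 i))) with hF
  have hn : ∀ p l, ‖F (p, l)‖ = ‖zW (A a) (2*k) p‖ *
      (‖Hyp.p a l p.1‖ * ‖q a l (p.1 + ∑ i, p.2 i)‖) := by
    intro p l
    simp [hF]
  have hs : Summable F := by
    refine Summable.of_norm ?_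
    rw [summable_prod_of_nonneg (fun _ => norm_nonneg _)]
    constructor
    · intro p
      simp_rw [hn]
      exact (hC _ _).1.mul_left _
    · refine Summable.of_nonneg_of_le (fun _ => tsum_nonneg fun _ => norm_nonneg _) (fun p => ?_)
        (hz.norm.mul_right C)
      simp_rw [hn]
      rw [tsum_mul_left]
      gcongr
      exact (hC _ _).2
  have e : ZetaInv k a = ∑' x, F x := by
    rw [ZetaInv_eq h.RD_A, hs.tsum_prod]
    refine tsum_congr fun p => ?_
    simp only [hF]
    rw [tsum_mul_left, (h.complete p.1 (p.1 + ∑ i, p.2 i)).tsum_eq]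
    simp [A]
  rw [e]
  have h2 : HasSum (fun x : ℤ × (ℤ × (Fin (2*k) → ℤ)) => F x.swap) (∑' x, F x) :=
    (Equiv.prodComm _ _).hasSum_iff.mpr hs.hasSum
  exact h2.prod_fiberwise fun l => (h2.summable.prod_factor l).hasSum

/-- the symmetric operator -/
def R (a : ℝ → ℝ) (u : ℤ → ℂ) : ℤ → ℂ :=
  conv (S a) fun n => ((|n| : ℤ) : ℂ) * conv (S a) u n

lemma RD_R (h : Hyp a) {u : ℤ → ℂ} (hu : RD u) : RD (R a u) :=
  h.RD_S.conv ((h.RD_S.conv hu).weight norm_absCast_le)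

lemma RD_Ri (h : Hyp a) {u : ℤ → ℂ} (hu : RD u) (i : ℕ) : RD ((R a)^[i] u) := by
  induction i with
  | zero => exact hu
  | succ i ih => rw [Function.iterate_succ_apply']; exact h.RD_R ih

lemma R_sym (h : Hyp a) {u v : ℤ → ℂ} (hu : RD u) (hv : RD v) : ip (R a u) v = ip u (R a v) := by
  unfold R
  rw [ip_conv h.RD_S Herm_S ((h.RD_S.conv hu).weight norm_absCast_le) hv,
    ip_weight (fun n => by simp), ip_conv h.RD_S Herm_S hu ((h.RD_S.conv hv).weight norm_absCast_le)]

lemma step_R (h : Hyp a) (l : ℤ) (i : ℕ) :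
    (stepOp (fun n => ((|n| : ℤ) : ℂ)) (A a))^[i] (p a l) = conv (S a) ((R a)^[i] (z a l)) := by
  induction i with
  | zero => exact h.p_eq l
  | succ i ih =>
    rw [Function.iterate_succ_apply', ih, Function.iterate_succ_apply']
    unfold stepOp
    rw [h.conv_A ((h.RD_S.conv (h.RD_Ri (h.RD_z l) i)).weight norm_absCast_le)]
    rfl

lemma step_id (h : Hyp a) (l : ℤ) (i : ℕ) :
    (stepOp (fun n => (n : ℂ)) (A a))^[i] (p a l) = fun n => (l:ℂ) ^ i * p a l n := by
  induction i with
  | zero => simp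
  | succ i ih =>
    rw [Function.iterate_succ_apply', ih]
    ext m
    have e : p a l m = conv (A a) (q a l) m := by
      rw [h.conv_A (h.RD_q l), ← h.z_eq, ← h.p_eq]
    rw [e]
    unfold stepOp conv
    rw [← tsum_mul_left]
    refine tsum_congr fun n => ?_
    have := h.pq l n
    beta_reduce
    rw [show (n:ℂ) * ((l:ℂ) ^ i * p a l n) = (l:ℂ)^i * (n * p a l n) by ring, this]
    ring

/-- `∑ |m| |p_l(m)|²` -/
def c (a : ℝ → ℝ) (l : ℤ) : ℝ := ∑' m : ℤ, |(m:ℝ)| * ‖p a l m‖ ^ 2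

lemma nsq_z (h : Hyp a) (l : ℤ) : nsq (z a l) = 1 := by
  have : ip (z a l) (z a l) = 1 := by
    rw [← h.ip_pq l]
    conv_lhs => rw [h.z_eq l]
    rw [ip_conv h.RD_S Herm_S (h.RD_q l) (h.RD_S.conv (h.RD_q l)), ← h.z_eq, ← h.p_eq]
    have h1 := ip_conv h.RD_S Herm_S (h.RD_z l) (h.RD_q l)
    have h2 := ip_conv h.RD_S Herm_S (h.RD_q l) (h.RD_z l)
    rw [← h.p_eq, ← h.z_eq] at h1 h2
    rw [h1, h2]
  rw [ip_self] at this
  exact_mod_cast this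

lemma ip_Rz (h : Hyp a) (l : ℤ) : ip (R a (z a l)) (z a l) = (c a l : ℂ) := by
  unfold R
  rw [ip_conv h.RD_S Herm_S ((h.RD_S.conv (h.RD_z l)).weight norm_absCast_le) (h.RD_z l), ← h.p_eq]
  unfold ip c
  rw [Complex.ofReal_tsum]
  refine tsum_congr fun n => ?_
  rw [mul_assoc, Complex.mul_conj', Complex.ofReal_mul, ← Int.cast_abs, Complex.ofReal_intCast,
    Complex.ofReal_pow]

lemma term_eq (h : Hyp a) (k : ℕ) (l : ℤ) :
    ∑' p : ℤ × (Fin (2*k) → ℤ),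
      zW (A a) (2*k) p * (Hyp.p a l p.1 * conj (q a l (p.1 + ∑ i, p.2 i))) =
      ((nsq ((R a)^[k] (z a l)) - (l:ℝ) ^ (2*k) : ℝ) : ℂ) := by
  rw [zW_tsum_split (u := p a l) (v := fun n => conj (q a l n)) h.RD_A (h.RD_p l) (h.RD_q l).conj,
    h.step_R, h.step_id]
  have h1 : ∑' n, conv (S a) ((R a)^[2*k] (z a l)) n * conj (q a l n) =
      ip ((R a)^[2*k] (z a l)) (z a l) := by
    rw [h.z_eq l, ← ip_conv h.RD_S Herm_S _ (h.RD_q l)]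
    · rfl
    · exact h.RD_Ri (h.RD_S.conv (h.RD_q l)) _
  have h2 : ∑' n, (l:ℂ) ^ (2*k) * p a l n * conj (q a l n) = (l:ℂ)^(2*k) := by
    simp_rw [mul_assoc]
    rw [tsum_mul_left]
    have := h.ip_pq l
    unfold ip at this
    rw [this, mul_one]
  rw [h1, h2, (jensen_sym (fun u hu => h.RD_R hu) (fun u v hu hv => h.R_sym hu hv) (h.RD_z l)
    (h.nsq_z l) (h.ip_Rz l) k).1]
  push_cast
  rfl

lemma c_summable (h : Hyp a) (l : ℤ) : Summable fun m : ℤ => |(m:ℝ)| * ‖p a l m‖ ^ 2 := by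
  have := (((h.RD_p l).weight norm_absCast_le).mul_bdd (h.RD_p l)).norm
  refine this.congr fun m => ?_
  simp only [norm_mul, Complex.norm_intCast]
  push_cast
  rw [abs_abs]; ring

lemma sum_l (h : Hyp a) (l : ℤ) : HasSum (fun m : ℤ => (m:ℝ) * ‖p a l m‖ ^ 2) l := by
  have hs : Summable fun m => p a l m * conj (q a l m) := (h.RD_p l).mul_bdd (h.RD_q l).conj
  have h1 : HasSum (fun m => p a l m * conj (q a l m)) 1 := by
    rw [← h.ip_pq l]; exact hs.hasSum
  have h2 := h1.mul_left (l:ℂ)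
  rw [← Complex.hasSum_ofReal]
  convert! h2 using 1
  · ext m
    have := congrArg conj (h.pq l m)
    simp only [map_mul, map_intCast] at this
    push_cast
    rw [show (l:ℂ) * (p a l m * conj (q a l m)) = p a l m * (l * conj (q a l m)) by ring, ← this,
      show p a l m * (m * conj (p a l m)) = m * (p a l m * conj (p a l m)) by ring,
      Complex.mul_conj']
  · simp

lemma c_ge (h : Hyp a) (l : ℤ) : |(l:ℝ)| ≤ c a l := by
  rw [← (h.sum_l l).tsum_eq]
  refine (norm_tsum_le_tsum_norm (f := fun m : ℤ => (m:ℝ) * ‖p a l m‖ ^ 2) ?_).trans (le_of_eq ?_)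
  · exact (h.c_summable l).congr fun m => by simp
  · unfold c; refine tsum_congr fun m => by simp

lemma c_gt (h : Hyp a) (l : ℤ) {m : ℤ} (hm : m < 0) (hp : p a l m ≠ 0) : (l:ℝ) < c a l := by
  rw [← (h.sum_l l).tsum_eq]
  unfold c
  refine Summable.tsum_lt_tsum (i := m) (fun n => ?_) ?_ (h.sum_l l).summable (h.c_summable l)
  · gcongr; exact le_abs_self _
  · have : 0 < ‖p a l m‖ := norm_pos_iff.mpr hp
    have h2 : (m:ℝ) < 0 := by exact_mod_cast hm
    gcongr
    rw [abs_of_neg h2]; linarith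

lemma zeta_ge (h : Hyp a) (k : ℕ) (l : ℤ) :
    c a l ^ (2*k) - (l:ℝ) ^ (2*k) ≤ (ZetaInv k a).re := by
  have hs := h.zeta_hasSum k
  simp_rw [h.term_eq] at hs
  have hre := Complex.hasSum_re hs
  simp only [Complex.ofReal_re] at hre
  have hj : ∀ l : ℤ, c a l ^ (2*k) ≤ nsq ((R a)^[k] (z a l)) := fun l =>
    (jensen_sym (fun u hu => h.RD_R hu) (fun u v hu hv => h.R_sym hu hv) (h.RD_z l)
    (h.nsq_z l) (h.ip_Rz l) k).2
  have h0 : ∀ l : ℤ, (0:ℝ) ≤ nsq ((R a)^[k] (z a l)) - (l:ℝ) ^ (2*k) := by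
    intro l
    have h1 := pow_le_pow_left₀ (abs_nonneg _) (h.c_ge l) (2*k)
    rw [(even_two_mul k).pow_abs] at h1
    linarith [hj l]
  refine le_trans ?_ (le_hasSum hre l fun j _ => h0 j)
  linarith [hj l]

/-- coefficients of `e^{imΘ}` -/
def r (h : Hyp a) (m : ℤ) : ℤ → ℂ := fCoef fun x => ex m (h.Th x)

lemma r_mul (h : Hyp a) (m n : ℤ) : h.r (m + n) = conv (h.r m) (h.r n) := by
  have hT := h.Th_cont
  have h1 := ex_cont m
  have h2 := ex_cont n
  unfold r
  rw [← fCoef_mul_eq (fun x => ex m (h.Th x)) (fun x => ex n (h.Th x)) (by fun_prop)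
    (h.Th_per (exp_periodic m)) (by fun_prop)
    (h.Th_per (exp_periodic n))]
  simp_rw [ex_mul]

lemma r_neg (h : Hyp a) (m l : ℤ) : h.r m (-l) = q a l (-m) := by
  unfold r
  rw [← Complex.conj_conj (q a l (-m)), h.conj_q, fCoef_conj]
  simp_rw [ex_conj, neg_neg]

/-- if `r_1` is supported on `n ≥ -P`, then `r_m` is supported on `n ≥ -Pm` -/
lemma r_supp (h : Hyp a) {P : ℤ} (hP : ∀ n < -P, h.r 1 n = 0) (m : ℕ) :
    (∀ n < -(P * (m+1)), h.r (m+1) n = 0) ∧ h.r (m+1) (-(P*(m+1))) = h.r 1 (-P) ^ (m+1) := by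
  induction m with
  | zero => simpa using hP
  | succ m ih =>
    obtain ⟨i1, i2⟩ := ih
    have e : h.r ((m+1 : ℕ) + 1) = conv (h.r (m+1)) (h.r 1) := by
      rw [← h.r_mul]; push_cast; rfl
    rw [e]
    constructor
    · intro n hn
      unfold conv
      convert! tsum_zero with j
      rcases lt_or_ge j (-P) with hj | hj
      · rw [hP j hj, mul_zero]
      · rw [i1, zero_mul]
        push_cast at hn
        linarith
    · unfold conv
      rw [tsum_eq_single (-P)]
      · rw [show -(P * (((m+1 : ℕ) : ℤ) + 1)) - -P = -(P * (m+1)) by push_cast; ring, i2, ← pow_succ]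
      · intro j hj
        rcases lt_or_ge j (-P) with hj' | hj'
        · rw [hP j hj', mul_zero]
        · rw [i1, zero_mul]
          have : -P < j := lt_of_le_of_ne hj' (Ne.symm hj)
          push_cast
          linarith

lemma infinitely (h : Hyp a) (hneg : ∃ m : ℤ, m < 0 ∧ p a 1 m ≠ 0) (N : ℤ) :
    ∃ l ≥ N, ∃ m < 0, p a l m ≠ 0 := by
  by_contra! hc
  have hrl : ∀ l ≥ max N 1, ∀ m : ℤ, 0 < m → h.r m (-l) = 0 := by
    intro l hl m hm
    rw [h.r_neg]
    have := h.pq l (-m)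
    rw [hc l (le_trans (le_max_left _ _) hl) (-m) (by linarith), mul_zero] at this
    have hl1 : (l:ℂ) ≠ 0 := by
      have : l ≠ 0 := by have := le_trans (le_max_right N 1) hl; omega
      exact_mod_cast this
    exact (mul_eq_zero.mp this.symm).resolve_left hl1
  set M := max N 1 with hM
  have hM1 : 1 ≤ M := le_max_right _ _
  -- all negative coefficients of `r 1` vanish
  have hr1 : ∀ P : ℤ, 0 < P → h.r 1 (-P) = 0 := by
    by_contra! hex
    obtain ⟨P0, hP0, hP0'⟩ := hex
    obtain ⟨P, ⟨hPpos, hPne⟩, hPmax⟩ := Int.exists_greatest_of_bdd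
      (P := fun P => 0 < P ∧ h.r 1 (-P) ≠ 0)
      ⟨M, fun P hP => by
        by_contra hlt
        exact hP.2 (hrl P (by linarith) 1 one_pos)⟩ ⟨P0, hP0, hP0'⟩
    have hsup : ∀ n < -P, h.r 1 n = 0 := by
      intro n hn
      by_contra hne
      have := hPmax (-n) ⟨by linarith, by rwa [neg_neg]⟩
      linarith
    obtain ⟨t, ht⟩ := Int.eq_ofNat_of_zero_le (by linarith : 0 ≤ M)
    have h2 := (h.r_supp hsup t).2
    rw [hrl (P * (t + 1)) (by nlinarith) (t+1) (by positivity)] at h2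
    exact pow_ne_zero _ hPne h2.symm
  have hsup : ∀ n < -(0:ℤ), h.r 1 n = 0 := by
    intro n hn
    have := hr1 (-n) (by linarith)
    rwa [neg_neg] at this
  obtain ⟨m, hm, hpm⟩ := hneg
  obtain ⟨t, ht⟩ := Int.eq_ofNat_of_zero_le (by linarith : 0 ≤ -m - 1)
  have h1 := (h.r_supp hsup t).1 (-1) (by simp)
  rw [h.r_neg, show -((t:ℤ) + 1) = m by linarith] at h1
  have h2 := h.pq 1 m
  rw [h1, mul_zero] at h2
  have hm0 : (m:ℂ) ≠ 0 := by exact_mod_cast hm.ne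
  exact hpm ((mul_eq_zero.mp h2).resolve_left hm0)

lemma final (h : Hyp a) (hneg : ∃ m : ℤ, m < 0 ∧ p a 1 m ≠ 0) (α : ℝ) :
    ∃ C : ℝ, 0 < C ∧ ∀ k : ℕ, 1 ≤ k → C * Real.exp (α * k) ≤ (ZetaInv k a).re := by
  obtain ⟨l, hl, m, hm, hp⟩ := h.infinitely hneg (max 1 ⌈Real.exp α⌉)
  have hgt := h.c_gt l hm hp
  have hl1 : (1:ℝ) ≤ l := by exact_mod_cast le_trans (le_max_left _ _) hl
  have hle : Real.exp α ≤ l := (Int.le_ceil _).trans (by exact_mod_cast le_trans (le_max_right _ _) hl)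
  have hl2 : Real.exp α ≤ (l:ℝ) ^ 2 := by nlinarith
  have hpos : 0 < c a l ^ 2 - (l:ℝ) ^ 2 := by nlinarith
  refine ⟨(c a l ^ 2 - (l:ℝ)^2) * (Real.exp α)⁻¹, by positivity, fun k hk => ?_⟩
  refine le_trans ?_ (h.zeta_ge k l)
  obtain ⟨j, rfl⟩ : ∃ j, k = j + 1 := ⟨k - 1, by omega⟩
  have e : Real.exp (α * ((j+1 : ℕ) : ℝ)) = Real.exp α ^ j * Real.exp α := by
    rw [← pow_succ, ← Real.exp_nat_mul]; congr 1; ring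
  have hb : Real.exp α ^ j ≤ ((l:ℝ)^2) ^ j := by gcongr
  have hcj : ((l:ℝ)^2) ^ j ≤ (c a l ^ 2) ^ j := by gcongr
  rw [e, pow_mul, pow_mul, pow_succ (c a l ^ 2), pow_succ ((l:ℝ) ^ 2)]
  have hne := (Real.exp_pos α).ne'
  calc (c a l ^ 2 - (l:ℝ)^2) * (Real.exp α)⁻¹ * (Real.exp α ^ j * Real.exp α)
      = (c a l ^ 2 - (l:ℝ)^2) * Real.exp α ^ j := by field_simp
    _ ≤ (c a l ^ 2 - (l:ℝ)^2) * ((l:ℝ)^2) ^ j := by gcongr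
    _ ≤ _ := by nlinarith [mul_le_mul_of_nonneg_right hcj (sq_nonneg (c a l))]

end Hyp

/-- **Theorem 1.2′ specialized to even negative integers.** If `a` is smooth, `2π`-periodic,
positive, normalized by `∫₀^{2π} a⁻¹ = 2π`, and not conformally equivalent to `1`
(i.e. `ψ̂(k) ≠ 0` for some `k < 0`, where `ψ = e^{iB}`), then for every `α > 0` there is
`C > 0` with `Z_k(a) ≥ C e^{αk}` for all `k ≥ 1`. -/
theorem zetaInv_exponential_growth
    (a : ℝ → ℝ) (ha : ContDiff ℝ (⊤ : ℕ∞) a) (haper : Function.Periodic a (2 * Real.pi))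
    (hapos : ∀ θ, 0 < a θ)
    (hnorm : (∫ θ in (0:ℝ)..(2 * Real.pi), (a θ)⁻¹) = 2 * Real.pi)
    (hneg : ∃ k : ℤ, k < 0 ∧
      fCoef (fun θ => Complex.exp (Complex.I * Bfun a θ)) k ≠ 0) :
    ∀ α : ℝ, 0 < α → ∃ C : ℝ, 0 < C ∧
      ∀ k : ℕ, 1 ≤ k → C * Real.exp (α * k) ≤ (ZetaInv k a).re := by
  intro α _
  have h : Hyp a := ⟨ha, haper, hapos, hnorm⟩
  refine h.final ?_ α
  obtain ⟨k, hk, hk'⟩ := hneg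
  refine ⟨k, hk, ?_⟩
  have e : Hyp.psi a 1 = fun θ => Complex.exp (Complex.I * Bfun a θ) := by
    ext θ; simp [Hyp.psi]
  rw [Hyp.p, e]
  exact hk'
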